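/- Let 1 ≤ p < ∞ and ψ an Orlicz function. Then ψ is equivalent for small arguments to a p-convex Orlicz function (i.e., one for which t ↦ ψ(t^{1/p}) is convex) if and only if there exists C > 0 such that ψ(st) ≤ C s^p ψ(t) for all 0 < s, t ≤ 1. Dually, ψ is equivalent for small arguments to a p-concave Orlicz function if and only if there exists C > 0 with s^p ψ(t) ≤ C ψ(st) for all 0 < s, t ≤ 1. -/

import Mathlib

open Set

/-- An Orlicz function: increasing, convex, continuous on `[0,∞)`, vanishing at `0`. -/
def IsOrlicz (M : ℝ → ℝ) : Prop :=
  StrictMonoOn M (Ici (0:ℝ)) ∧ ConvexOn ℝ (Ici (0:ℝ)) M ∧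
    ContinuousOn M (Ici (0:ℝ)) ∧ M 0 = 0

/-- Two functions are equivalent for small values of the argument. -/
def EquivSmall (f g : ℝ → ℝ) : Prop :=
  ∃ C t₀ : ℝ, 0 < C ∧ 0 < t₀ ∧
    ∀ t : ℝ, 0 < t → t ≤ t₀ → f t ≤ C * g t ∧ g t ≤ C * f t

/-! A `p`-convex function vanishing at `0` satisfies `φ (s t) ≤ s ^ p φ t`, and this estimate
survives equivalence up to a constant. Conversely, the growth condition says that `ψ t / t ^ p` is
increasing up to a constant. The right derivative `g` of `ψ` satisfies `ψ x ≤ x g x ≤ ψ (2 x)`, so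
that `g x / x ^ (p - 1)` is also increasing up to a constant near `0`, hence comparable to an
increasing function `h`. Then `φ t = ∫₀ᵗ x ^ (p - 1) h x dx` is equivalent to `ψ`, and it is
`p`-convex, since after the substitution `x = u ^ (1 / p)` its derivative is
`h (u ^ (1 / p)) / p`. The `p`-concave case is the same with `h` decreasing, but `x ^ (p - 1) h x`
must remain increasing for `φ` to be convex: the greatest decreasing minorant of
`g x / x ^ (p - 1)` has this property because `g` is increasing. -/

open MeasureTheory intervalIntegral

section Scaling

variable {E : Type*} [AddCommGroup E] [Module ℝ E] {S : Set E} {f : E → ℝ} {c : ℝ} {x : E}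

lemma apply_smul_le_of_convexOn (hf : ConvexOn ℝ S f) (h0 : (0 : E) ∈ S) (hf0 : f 0 ≤ 0)
    (hc : c ∈ Icc (0 : ℝ) 1) (hx : x ∈ S) : f (c • x) ≤ c * f x := by
  have h := hf.2 hx h0 hc.1 (sub_nonneg.2 hc.2) (add_sub_cancel c 1)
  rw [smul_zero, add_zero, smul_eq_mul, smul_eq_mul] at h
  exact h.trans (add_le_of_nonpos_right (mul_nonpos_of_nonneg_of_nonpos (sub_nonneg.2 hc.2) hf0))

end Scaling

section PConvex

variable {φ : ℝ → ℝ} {p s t : ℝ}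

lemma apply_mul_le_of_convexOn_comp_rpow (hp : 0 < p)
    (hφ : ConvexOn ℝ (Ici 0) fun u => φ (u ^ p⁻¹)) (hφ0 : φ 0 ≤ 0) (hs : s ∈ Icc (0 : ℝ) 1)
    (ht : 0 ≤ t) : φ (s * t) ≤ s ^ p * φ t := by
  have h := apply_smul_le_of_convexOn hφ self_mem_Ici (by simpa [hp.ne'] using hφ0)
    ⟨Real.rpow_nonneg hs.1 p, Real.rpow_le_one hs.1 hs.2 hp.le⟩ (Real.rpow_nonneg ht p)
  rwa [smul_eq_mul, ← Real.mul_rpow hs.1 ht, Real.rpow_rpow_inv (mul_nonneg hs.1 ht) hp.ne',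
    Real.rpow_rpow_inv ht hp.ne'] at h

lemma le_apply_mul_of_concaveOn_comp_rpow (hp : 0 < p)
    (hφ : ConcaveOn ℝ (Ici 0) fun u => φ (u ^ p⁻¹)) (hφ0 : 0 ≤ φ 0) (hs : s ∈ Icc (0 : ℝ) 1)
    (ht : 0 ≤ t) : s ^ p * φ t ≤ φ (s * t) := by
  simpa using apply_mul_le_of_convexOn_comp_rpow (φ := -φ) hp hφ.neg (neg_nonpos.2 hφ0) hs ht

end PConvex

section EquivSmall

variable {φ ψ : ℝ → ℝ}

lemma IsOrlicz.apply_zero (hψ : IsOrlicz ψ) : ψ 0 = 0 :=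
  hψ.2.2.2

lemma IsOrlicz.pos (hψ : IsOrlicz ψ) {t : ℝ} (ht : 0 < t) : 0 < ψ t :=
  hψ.apply_zero ▸ hψ.1 self_mem_Ici ht.le ht

lemma IsOrlicz.mono (hψ : IsOrlicz ψ) {s t : ℝ} (hs : 0 ≤ s) (hst : s ≤ t) : ψ s ≤ ψ t :=
  hψ.1.monotoneOn hs (hs.trans hst) hst

lemma IsOrlicz.exists_le_mul_on_Ioc (hψ : IsOrlicz ψ) (hφ : IsOrlicz φ) {C t₀ : ℝ} (ht₀ : 0 < t₀)
    (h : ∀ t ∈ Ioc 0 t₀, ψ t ≤ C * φ t) (T : ℝ) : ∃ D, ∀ t ∈ Ioc 0 T, ψ t ≤ D * φ t := by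
  refine ⟨max C (ψ T / φ t₀), fun t ⟨ht, htT⟩ => ?_⟩
  have hφt := (hφ.pos ht).le
  rcases le_total t t₀ with htt₀ | htt₀
  · calc ψ t ≤ C * φ t := h t ⟨ht, htt₀⟩
      _ ≤ max C (ψ T / φ t₀) * φ t := by gcongr; exact le_max_left _ _
  · have hψT := (hψ.pos (ht.trans_le htT)).le
    have hφt₀ := hφ.pos ht₀
    calc ψ t ≤ ψ T := hψ.mono ht.le htT
      _ = ψ T / φ t₀ * φ t₀ := (div_mul_cancel₀ _ hφt₀.ne').symm
      _ ≤ ψ T / φ t₀ * φ t := by gcongr; exact hφ.mono ht₀.le htt₀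
      _ ≤ max C (ψ T / φ t₀) * φ t := by gcongr; exact le_max_right _ _

lemma EquivSmall.exists_le_mul_on_Ioc (h : EquivSmall ψ φ) (hψ : IsOrlicz ψ) (hφ : IsOrlicz φ)
    (T : ℝ) : ∃ D, 0 < D ∧ ∀ t ∈ Ioc 0 T, ψ t ≤ D * φ t ∧ φ t ≤ D * ψ t := by
  obtain ⟨C, t₀, -, ht₀, hC⟩ := h
  obtain ⟨D₁, hD₁⟩ := hψ.exists_le_mul_on_Ioc hφ ht₀ (fun t ht => (hC t ht.1 ht.2).1) T
  obtain ⟨D₂, hD₂⟩ := hφ.exists_le_mul_on_Ioc hψ ht₀ (fun t ht => (hC t ht.1 ht.2).2) T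
  refine ⟨max 1 (max D₁ D₂), by positivity, fun t ht => ⟨?_, ?_⟩⟩
  · refine (hD₁ t ht).trans (mul_le_mul_of_nonneg_right ?_ (hφ.pos ht.1).le)
    exact (le_max_left _ _).trans (le_max_right _ _)
  · refine (hD₂ t ht).trans (mul_le_mul_of_nonneg_right ?_ (hψ.pos ht.1).le)
    exact (le_max_right _ _).trans (le_max_right _ _)

end EquivSmall

section AlmostMonotone

variable {α : Type*} [LinearOrder α] {a T : α} {f w : α → ℝ} {K : ℝ}

lemma exists_monotoneOn_minorant (hT : a < T) (hK : 0 < K) (hf0 : ∀ x ∈ Ioc a T, 0 ≤ f x)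
    (hf : ∀ x ∈ Ioc a T, ∀ y ∈ Ioc a T, x ≤ y → f x ≤ K * f y) :
    ∃ h : α → ℝ, MonotoneOn h (Ioi a) ∧ (∀ x ∈ Ioi a, 0 ≤ h x) ∧
      ∀ x ∈ Ioc a T, h x ≤ f x ∧ f x ≤ K * h x := by
  have hsub : ∀ {x}, a < x → Icc (min x T) T ⊆ Ioc a T := fun hx y hy =>
    ⟨(lt_min hx hT).trans_le hy.1, hy.2⟩
  have hne : ∀ x, (f '' Icc (min x T) T).Nonempty := fun x =>
    ⟨f T, T, ⟨min_le_right _ _, le_rfl⟩, rfl⟩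
  have hbdd : ∀ {x}, a < x → BddBelow (f '' Icc (min x T) T) := fun hx =>
    ⟨0, forall_mem_image.2 fun y hy => hf0 y (hsub hx hy)⟩
  refine ⟨fun x => sInf (f '' Icc (min x T) T), fun x hx y _ hxy => ?_, fun x hx => ?_,
    fun x hx => ⟨?_, ?_⟩⟩
  · exact csInf_le_csInf (hbdd hx) (hne y)
      (image_mono (Icc_subset_Icc_left (min_le_min_right T hxy)))
  · exact le_csInf (hne x) (forall_mem_image.2 fun y hy => hf0 y (hsub hx hy))
  · exact csInf_le (hbdd hx.1) (mem_image_of_mem f ⟨min_le_left _ _, hx.2⟩)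
  · rw [← div_le_iff₀' hK]
    refine le_csInf (hne x) (forall_mem_image.2 fun y hy => (div_le_iff₀' hK).2 ?_)
    exact hf x hx y (hsub hx.1 hy) (min_eq_left hx.2 ▸ hy.1)

lemma exists_antitoneOn_minorant (hK : 0 < K) (hw0 : ∀ x ∈ Ioi a, 0 < w x)
    (hw : MonotoneOn w (Ioi a)) (hf0 : ∀ x ∈ Ioi a, 0 ≤ f x)
    (hwf : MonotoneOn (fun x => w x * f x) (Ioi a))
    (hf : ∀ x ∈ Ioc a T, ∀ y ∈ Ioc a T, x ≤ y → f y ≤ K * f x) :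
    ∃ h : α → ℝ, AntitoneOn h (Ioi a) ∧ MonotoneOn (fun x => w x * h x) (Ioi a) ∧
      ∀ x ∈ Ioc a T, h x ≤ f x ∧ f x ≤ K * h x := by
  have hne : ∀ {x}, a < x → (f '' Ioc a x).Nonempty := fun hx => (nonempty_Ioc.2 hx).image f
  have hbdd : ∀ x, BddBelow (f '' Ioc a x) := fun x =>
    ⟨0, forall_mem_image.2 fun y hy => hf0 y hy.1⟩
  have hle : ∀ {x y}, y ∈ Ioc a x → sInf (f '' Ioc a x) ≤ f y := fun hy =>
    csInf_le (hbdd _) (mem_image_of_mem f hy)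
  refine ⟨fun x => sInf (f '' Ioc a x), fun x hx y _ hxy => ?_, fun x hx y hy hxy => ?_,
    fun x hx => ⟨hle ⟨hx.1, le_rfl⟩, ?_⟩⟩
  · exact csInf_le_csInf (hbdd y) (hne hx) (image_mono (Ioc_subset_Ioc_right hxy))
  · rw [← div_le_iff₀' (hw0 y hy)]
    refine le_csInf (hne hy) (forall_mem_image.2 fun z hz => (div_le_iff₀' (hw0 y hy)).2 ?_)
    have hwx := (hw0 x hx).le
    have hfz := hf0 z hz.1
    rcases le_total z x with hzx | hxz
    · calc w x * sInf (f '' Ioc a x) ≤ w x * f z := by gcongr; exact hle ⟨hz.1, hzx⟩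
        _ ≤ w y * f z := by gcongr; exact hw hx hy hxy
    · calc w x * sInf (f '' Ioc a x) ≤ w x * f x := by gcongr; exact hle ⟨hx, le_rfl⟩
        _ ≤ w z * f z := hwf hx hz.1 hxz
        _ ≤ w y * f z := by gcongr; exact hw hz.1 hy hz.2
  · rw [← div_le_iff₀' hK]
    refine le_csInf (hne hx.1) (forall_mem_image.2 fun y hy => (div_le_iff₀' hK).2 ?_)
    exact hf y ⟨hy.1, hy.2.trans hx.2⟩ x hx hy.2

end AlmostMonotone

section Integral

variable {g h w : ℝ → ℝ} {a c s t p : ℝ}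

lemma monotone_indicator_Ioi_of_nonneg (hg : MonotoneOn g (Ioi a)) (hg0 : ∀ x ∈ Ioi a, 0 ≤ g x) :
    Monotone ((Ioi a).indicator g) := by
  intro x y hxy
  by_cases hx : x ∈ Ioi a
  · have hy : y ∈ Ioi a := lt_of_lt_of_le hx hxy
    simpa only [indicator_of_mem hx, indicator_of_mem hy] using hg hx hy hxy
  · simpa only [indicator_of_notMem hx] using indicator_nonneg hg0 y

lemma intervalIntegrable_of_monotoneOn_Ioi (hg : MonotoneOn g (Ioi a))
    (hg0 : ∀ x ∈ Ioi a, 0 ≤ g x) (hs : a ≤ s) (ht : a ≤ t) : IntervalIntegrable g volume s t := by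
  refine (monotone_indicator_Ioi_of_nonneg hg hg0).intervalIntegrable.congr fun x hx => ?_
  exact indicator_of_mem (lt_of_le_of_lt (le_min hs ht) hx.1) g

lemma mul_integral_le_integral_mul_of_monotoneOn (hw0 : ∀ x ∈ Ioi a, 0 ≤ w x)
    (hh : MonotoneOn h (Ioi a)) (hc : a < c) (ht : a ≤ t)
    (hw : IntervalIntegrable w volume c t)
    (hwh : IntervalIntegrable (fun x => w x * h x) volume c t) :
    h c * ∫ x in c..t, w x ≤ ∫ x in c..t, w x * h x := by
  rw [← intervalIntegral.integral_const_mul]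
  rcases le_total c t with hct | htc
  · refine integral_mono_on_of_le_Ioo hct (hw.const_mul _) hwh fun x hx => ?_
    have hx' : x ∈ Ioi a := hc.trans hx.1
    rw [mul_comm]
    exact mul_le_mul_of_nonneg_left (hh hc hx' hx.1.le) (hw0 x hx')
  · rw [integral_symm t c, integral_symm t c, neg_le_neg_iff]
    refine integral_mono_on_of_le_Ioo htc hwh.symm (hw.const_mul _).symm fun x hx => ?_
    have hx' : x ∈ Ioi a := ht.trans_lt hx.1
    rw [mul_comm (h c)]
    exact mul_le_mul_of_nonneg_left (hh hx' hc hx.2.le) (hw0 x hx')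

lemma convexOn_integral_rpow_mul_comp_rpow (hp : 0 < p) (hh : MonotoneOn h (Ioi 0))
    (hi : ∀ s t, 0 ≤ s → 0 ≤ t → IntervalIntegrable (fun x => x ^ (p - 1) * h x) volume s t) :
    ConvexOn ℝ (Ici 0) fun u => ∫ x in (0 : ℝ)..u ^ p⁻¹, x ^ (p - 1) * h x := by
  set F : ℝ → ℝ := fun u => ∫ x in (0 : ℝ)..u ^ p⁻¹, x ^ (p - 1) * h x
  have supporting_line : ∀ y > 0, ∀ z ≥ 0, h (y ^ p⁻¹) * ((z - y) / p) ≤ F z - F y := by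
    intro y hy z hz
    have hy' : 0 < y ^ p⁻¹ := Real.rpow_pos_of_pos hy _
    have hz' : 0 ≤ z ^ p⁻¹ := Real.rpow_nonneg hz _
    have hweight : ∫ x in y ^ p⁻¹..z ^ p⁻¹, x ^ (p - 1) = (z - y) / p := by
      rw [integral_rpow (Or.inl (by linarith)), sub_add_cancel, Real.rpow_inv_rpow hz hp.ne',
        Real.rpow_inv_rpow hy.le hp.ne']
    rw [← hweight, integral_interval_sub_left (hi _ _ le_rfl hz') (hi _ _ le_rfl hy'.le)]
    exact mul_integral_le_integral_mul_of_monotoneOn (fun x hx => Real.rpow_nonneg (le_of_lt hx) _)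
      hh hy' hz' (intervalIntegrable_rpow' (by linarith)) (hi _ _ hy'.le hz')
  refine convexOn_of_slope_mono_adjacent (convex_Ici 0) fun {x y z} hx hz hxy hyz => ?_
  have hy : 0 < y := lt_of_le_of_lt hx hxy
  calc (F y - F x) / (y - x) ≤ h (y ^ p⁻¹) / p := by
        rw [div_le_iff₀ (sub_pos.2 hxy)]
        linear_combination supporting_line y hy x hx
    _ ≤ (F z - F y) / (z - y) := by
        rw [le_div_iff₀ (sub_pos.2 hyz)]
        linear_combination supporting_line y hy z hz

end Integral

/-- `ψ` is the primitive, on `[0,∞)`, of the positive nondecreasing density `g`. The value `g 0` is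
left free, so that the right derivative of an Orlicz function can serve as `g`. -/
structure HasOrliczDensity (ψ g : ℝ → ℝ) : Prop where
  monotoneOn : MonotoneOn g (Ioi 0)
  pos : ∀ x ∈ Ioi 0, 0 < g x
  eq_integral : ∀ t ∈ Ici 0, ψ t = ∫ x in (0 : ℝ)..t, g x

lemma IsOrlicz.hasOrliczDensity_rightDeriv {ψ : ℝ → ℝ} (hψ : IsOrlicz ψ) :
    HasOrliczDensity ψ fun x => derivWithin ψ (Ioi x) x := by
  obtain ⟨-, hconv, hcont, hψ0⟩ := id hψ
  have hmono := interior_Ici (a := (0 : ℝ)) ▸ hconv.monotoneOn_rightDeriv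
  have hint : ∀ x > 0, x ∈ interior (Ici (0 : ℝ)) := fun x hx => by rwa [interior_Ici]
  have hpos : ∀ x ∈ Ioi (0 : ℝ), 0 < derivWithin ψ (Ioi x) x := fun x hx => by
    calc 0 < slope ψ 0 x := by
          rw [slope_def_field, hψ0, sub_zero, sub_zero]
          exact div_pos (hψ.pos hx) hx
      _ ≤ derivWithin ψ (Iio x) x :=
        hconv.slope_le_leftDeriv_of_mem_interior self_mem_Ici (hint x hx) hx
      _ ≤ derivWithin ψ (Ioi x) x :=
        hconv.leftDeriv_le_rightDeriv_of_mem_interior (hint x hx)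
  refine ⟨hmono, hpos, fun t ht => ?_⟩
  rw [integral_eq_sub_of_hasDeriv_right_of_le ht (hcont.mono Icc_subset_Ici_self)
    (fun x hx => hconv.hasDerivWithinAt_rightDeriv_of_mem_interior (hint x hx.1))
    (intervalIntegrable_of_monotoneOn_Ioi hmono (fun x hx => (hpos x hx).le) le_rfl ht),
    hψ0, sub_zero]

namespace HasOrliczDensity

variable {φ ψ b g h w : ℝ → ℝ} {p x s t C K T : ℝ}

lemma of_pos_on_Ioc (hg : MonotoneOn g (Ioi 0)) (hT : 0 < T) (hpos : ∀ x ∈ Ioc 0 T, 0 < g x) :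
    HasOrliczDensity (fun t => ∫ x in (0 : ℝ)..t, g x) g where
  monotoneOn := hg
  pos x hx := by
    have hmin : 0 < min x T := lt_min hx hT
    exact (hpos _ ⟨hmin, min_le_right _ _⟩).trans_le (hg hmin hx (min_le_left _ _))
  eq_integral _ _ := rfl

lemma intervalIntegrable (hψ : HasOrliczDensity ψ g) (hs : 0 ≤ s) (ht : 0 ≤ t) :
    IntervalIntegrable g volume s t :=
  intervalIntegrable_of_monotoneOn_Ioi hψ.monotoneOn (fun x hx => (hψ.pos x hx).le) hs ht

lemma sub_eq_integral (hψ : HasOrliczDensity ψ g) (hs : 0 ≤ s) (ht : 0 ≤ t) :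
    ψ t - ψ s = ∫ x in s..t, g x := by
  rw [hψ.eq_integral t ht, hψ.eq_integral s hs,
    integral_interval_sub_left (hψ.intervalIntegrable le_rfl ht) (hψ.intervalIntegrable le_rfl hs)]

lemma convexOn_comp_rpow (hp : 0 < p) (hφ : HasOrliczDensity φ fun x => x ^ (p - 1) * h x)
    (hh : MonotoneOn h (Ioi 0)) : ConvexOn ℝ (Ici 0) fun u => φ (u ^ p⁻¹) :=
  (convexOn_integral_rpow_mul_comp_rpow hp hh fun _ _ => hφ.intervalIntegrable).congr
    fun _ hu => (hφ.eq_integral _ (Real.rpow_nonneg hu _)).symm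

lemma concaveOn_comp_rpow (hp : 0 < p) (hφ : HasOrliczDensity φ fun x => x ^ (p - 1) * h x)
    (hh : AntitoneOn h (Ioi 0)) : ConcaveOn ℝ (Ici 0) fun u => φ (u ^ p⁻¹) := by
  have hconv := convexOn_integral_rpow_mul_comp_rpow hp hh.neg fun s t hs ht => by
    simp only [mul_neg]
    exact (hφ.intervalIntegrable hs ht).neg
  refine neg_convexOn_iff.1 (hconv.congr fun u hu => ?_)
  simp [hφ.eq_integral _ (Real.rpow_nonneg hu _)]

lemma continuousOn (hψ : HasOrliczDensity ψ g) : ContinuousOn ψ (Ici 0) := by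
  have hmono := monotone_indicator_Ioi_of_nonneg hψ.monotoneOn fun x hx => (hψ.pos x hx).le
  refine (continuous_primitive (fun s t => hmono.intervalIntegrable) 0).continuousOn.congr
    fun t ht => (hψ.eq_integral t ht).trans (integral_congr_uIoo fun x hx => ?_)
  exact (indicator_of_mem (lt_of_le_of_lt (le_min le_rfl ht) hx.1) g).symm

lemma isOrlicz (hψ : HasOrliczDensity ψ g) : IsOrlicz ψ := by
  refine ⟨fun s hs t ht hst => ?_, ?_, hψ.continuousOn, by simp [hψ.eq_integral 0 self_mem_Ici]⟩
  · rw [← sub_pos, hψ.sub_eq_integral hs ht]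
    exact intervalIntegral_pos_of_pos_on (hψ.intervalIntegrable hs ht)
      (fun x hx => hψ.pos x (lt_of_le_of_lt hs hx.1)) hst
  · simpa using convexOn_comp_rpow one_pos (by simpa using hψ) hψ.monotoneOn

lemma mul_sub_le_sub (hψ : HasOrliczDensity ψ g) (hx : 0 < x) (ht : 0 ≤ t) :
    g x * (t - x) ≤ ψ t - ψ x := by
  rw [hψ.sub_eq_integral hx.le ht]
  simpa using mul_integral_le_integral_mul_of_monotoneOn (w := 1) (fun _ _ => zero_le_one)
    hψ.monotoneOn hx ht intervalIntegrable_const (by simpa using hψ.intervalIntegrable hx.le ht)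

lemma apply_le_mul (hψ : HasOrliczDensity ψ g) (hx : 0 < x) : ψ x ≤ x * g x := by
  linear_combination hψ.mul_sub_le_sub hx le_rfl + hψ.isOrlicz.apply_zero

lemma mul_le_apply_two_mul (hψ : HasOrliczDensity ψ g) (hx : 0 < x) : x * g x ≤ ψ (2 * x) := by
  linear_combination hψ.mul_sub_le_sub hx (mul_nonneg zero_le_two hx.le) + hψ.isOrlicz.pos hx

lemma apply_le_mul_apply (hψ : HasOrliczDensity ψ g) (hφ : HasOrliczDensity φ b)
    (h : ∀ x ∈ Ioc 0 T, g x ≤ C * b x) (ht : t ∈ Icc 0 T) : ψ t ≤ C * φ t := by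
  rw [hψ.eq_integral t ht.1, hφ.eq_integral t ht.1, ← intervalIntegral.integral_const_mul]
  exact integral_mono_on_of_le_Ioo ht.1 (hψ.intervalIntegrable le_rfl ht.1)
    ((hφ.intervalIntegrable le_rfl ht.1).const_mul C)
    fun x hx => h x ⟨hx.1, hx.2.le.trans ht.2⟩

lemma equivSmall (hψ : HasOrliczDensity ψ g) (hφ : HasOrliczDensity φ b) (hC : 0 < C) (hT : 0 < T)
    (h : ∀ x ∈ Ioc 0 T, g x ≤ C * b x ∧ b x ≤ C * g x) : EquivSmall ψ φ :=
  ⟨C, T, hC, hT, fun _ ht htT =>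
    ⟨hψ.apply_le_mul_apply hφ (fun x hx => (h x hx).1) ⟨ht.le, htT⟩,
      hφ.apply_le_mul_apply hψ (fun x hx => (h x hx).2) ⟨ht.le, htT⟩⟩⟩

lemma of_div_le (hψ : HasOrliczDensity ψ g) (hT : 0 < T) (hK : 0 < K) (hw : ∀ x ∈ Ioc 0 T, 0 < w x)
    (hwh : MonotoneOn (fun x => w x * h x) (Ioi 0))
    (hh : ∀ x ∈ Ioc 0 T, h x ≤ g x / w x ∧ g x / w x ≤ K * h x) :
    HasOrliczDensity (fun t => ∫ x in (0 : ℝ)..t, w x * h x) (fun x => w x * h x) :=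
  of_pos_on_Ioc hwh hT fun x hx => mul_pos (hw x hx) <|
    pos_of_mul_pos_right ((div_pos (hψ.pos x hx.1) (hw x hx)).trans_le (hh x hx).2) hK.le

lemma equivSmall_of_div_le (hψ : HasOrliczDensity ψ g) (hφ : HasOrliczDensity φ fun x => w x * h x)
    (hT : 0 < T) (hw : ∀ x ∈ Ioc 0 T, 0 < w x)
    (hh : ∀ x ∈ Ioc 0 T, h x ≤ g x / w x ∧ g x / w x ≤ K * h x) : EquivSmall ψ φ := by
  refine hψ.equivSmall hφ (C := max 1 K) (by positivity) hT fun x hx => ⟨?_, ?_⟩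
  · calc g x ≤ K * h x * w x := (div_le_iff₀ (hw x hx)).1 (hh x hx).2
      _ = K * (w x * h x) := by ring
      _ ≤ max 1 K * (w x * h x) :=
        mul_le_mul_of_nonneg_right (le_max_right _ _) (hφ.pos x hx.1).le
  · calc w x * h x ≤ g x := (le_div_iff₀' (hw x hx)).1 (hh x hx).1
      _ ≤ max 1 K * g x := le_mul_of_one_le_left (hψ.pos x hx.1).le (le_max_left _ _)

lemma apply_div_rpow_le (hψ : HasOrliczDensity ψ g) (hx : 0 < x) :
    ψ x / x ^ p ≤ g x / x ^ (p - 1) := by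
  rw [Real.rpow_sub_one hx.ne', div_div_eq_mul_div, mul_comm (g x)]
  gcongr
  exact hψ.apply_le_mul hx

lemma div_rpow_le_apply_two_mul (hψ : HasOrliczDensity ψ g) (hx : 0 < x) :
    g x / x ^ (p - 1) ≤ 2 ^ p * (ψ (2 * x) / (2 * x) ^ p) := by
  rw [Real.rpow_sub_one hx.ne', div_div_eq_mul_div, mul_comm (g x),
    Real.mul_rpow zero_le_two hx.le, ← mul_div_assoc, mul_div_mul_left _ _ (by positivity)]
  gcongr
  exact hψ.mul_le_apply_two_mul hx

lemma div_rpow_le_of_apply_div_rpow_le (hψ : HasOrliczDensity ψ g) (hp : 1 ≤ p)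
    (hC : ∀ x ∈ Ioc 0 T, ∀ y ∈ Ioc 0 T, x ≤ y → ψ x / x ^ p ≤ C * (ψ y / y ^ p))
    {y : ℝ} (hx : 0 < x) (hxy : x ≤ y) (hy : y ≤ T) :
    g x / x ^ (p - 1) ≤ 2 ^ p * max 1 C * (g y / y ^ (p - 1)) := by
  have hy0 : 0 < y := hx.trans_le hxy
  have hgy : 0 < g y := hψ.pos y hy0
  -- If `2 * x ≤ y`, the bound of `g` by `ψ` at the doubled point suffices; otherwise `x` and `y`
  -- are comparable, hence so are their powers, and monotonicity of `g` does the rest.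
  rcases le_total (2 * x) y with hfar | hnear
  · have hψy : 0 < ψ y / y ^ p := div_pos (hψ.isOrlicz.pos hy0) (Real.rpow_pos_of_pos hy0 _)
    have hx2 : 0 < 2 * x := by positivity
    calc g x / x ^ (p - 1) ≤ 2 ^ p * (ψ (2 * x) / (2 * x) ^ p) := hψ.div_rpow_le_apply_two_mul hx
      _ ≤ 2 ^ p * (C * (ψ y / y ^ p)) := by
        gcongr; exact hC _ ⟨hx2, hfar.trans hy⟩ y ⟨hy0, hy⟩ hfar
      _ ≤ 2 ^ p * (max 1 C * (g y / y ^ (p - 1))) := by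
        gcongr ?_ * (?_ * ?_)
        exacts [le_max_right _ _, hψ.apply_div_rpow_le hy0]
      _ = 2 ^ p * max 1 C * (g y / y ^ (p - 1)) := (mul_assoc _ _ _).symm
  · calc g x / x ^ (p - 1) ≤ g y / (y / 2) ^ (p - 1) := by
          gcongr
          exacts [hψ.monotoneOn hx hy0 hxy, by linarith]
      _ = 2 ^ (p - 1) * (g y / y ^ (p - 1)) := by
        rw [Real.div_rpow hy0.le zero_le_two]; field_simp
      _ ≤ 2 ^ p * max 1 C * (g y / y ^ (p - 1)) := by
        gcongr
        calc (2 : ℝ) ^ (p - 1) ≤ 2 ^ p := by gcongr <;> linarith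
          _ ≤ 2 ^ p * max 1 C := le_mul_of_one_le_right (by positivity) (le_max_left _ _)

lemma div_rpow_le_of_le_apply_div_rpow (hψ : HasOrliczDensity ψ g) (hC0 : 0 ≤ C)
    (hC : ∀ x ∈ Ioc 0 T, ∀ y ∈ Ioc 0 T, x ≤ y → ψ y / y ^ p ≤ C * (ψ x / x ^ p))
    {y : ℝ} (hx : 0 < x) (hxy : x ≤ y) (hy : 2 * y ≤ T) :
    g y / y ^ (p - 1) ≤ 2 ^ p * C * (g x / x ^ (p - 1)) := by
  have hy0 : 0 < y := hx.trans_le hxy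
  have hx2y : x ≤ 2 * y := by linarith
  calc g y / y ^ (p - 1) ≤ 2 ^ p * (ψ (2 * y) / (2 * y) ^ p) := hψ.div_rpow_le_apply_two_mul hy0
    _ ≤ 2 ^ p * (C * (ψ x / x ^ p)) := by
      gcongr; exact hC x ⟨hx, hx2y.trans hy⟩ _ ⟨by positivity, hy⟩ hx2y
    _ ≤ 2 ^ p * (C * (g x / x ^ (p - 1))) := by
      gcongr ?_ * (?_ * ?_); exact hψ.apply_div_rpow_le hx
    _ = 2 ^ p * C * (g x / x ^ (p - 1)) := (mul_assoc _ _ _).symm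

end HasOrliczDensity

section Characterization

variable {φ ψ : ℝ → ℝ} {p C T : ℝ}

lemma div_rpow_le_of_apply_mul_le
    (h : ∀ s ∈ Ioc (0 : ℝ) 1, ∀ t ∈ Ioc (0 : ℝ) T, ψ (s * t) ≤ C * s ^ p * ψ t) :
    ∀ x ∈ Ioc 0 T, ∀ y ∈ Ioc 0 T, x ≤ y → ψ x / x ^ p ≤ C * (ψ y / y ^ p) := by
  intro x hx y hy hxy
  rw [div_le_iff₀ (Real.rpow_pos_of_pos hx.1 p)]
  calc ψ x = ψ (x / y * y) := by rw [div_mul_cancel₀ x hy.1.ne']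
    _ ≤ C * (x / y) ^ p * ψ y := h _ ⟨div_pos hx.1 hy.1, div_le_one_of_le₀ hxy hy.1.le⟩ y hy
    _ = C * (ψ y / y ^ p) * x ^ p := by rw [Real.div_rpow hx.1.le hy.1.le]; ring

lemma div_rpow_le_of_le_apply_mul
    (h : ∀ s ∈ Ioc (0 : ℝ) 1, ∀ t ∈ Ioc (0 : ℝ) T, s ^ p * ψ t ≤ C * ψ (s * t)) :
    ∀ x ∈ Ioc 0 T, ∀ y ∈ Ioc 0 T, x ≤ y → ψ y / y ^ p ≤ C * (ψ x / x ^ p) := by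
  intro x hx y hy hxy
  rw [← mul_div_assoc, le_div_iff₀ (Real.rpow_pos_of_pos hx.1 p)]
  calc ψ y / y ^ p * x ^ p = (x / y) ^ p * ψ y := by rw [Real.div_rpow hx.1.le hy.1.le]; ring
    _ ≤ C * ψ (x / y * y) := h _ ⟨div_pos hx.1 hy.1, div_le_one_of_le₀ hxy hy.1.le⟩ y hy
    _ = C * ψ x := by rw [div_mul_cancel₀ x hy.1.ne']

lemma EquivSmall.exists_apply_mul_le (h : EquivSmall ψ φ) (hψ : IsOrlicz ψ) (hφ : IsOrlicz φ)
    (hp : 0 < p) (hconv : ConvexOn ℝ (Ici 0) fun u => φ (u ^ p⁻¹)) (T : ℝ) :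
    ∃ C, 0 < C ∧ ∀ s ∈ Ioc (0 : ℝ) 1, ∀ t ∈ Ioc 0 T, ψ (s * t) ≤ C * s ^ p * ψ t := by
  obtain ⟨D, hD, hequiv⟩ := h.exists_le_mul_on_Ioc hψ hφ T
  refine ⟨D ^ 2, by positivity, fun s hs t ht => ?_⟩
  have hst : s * t ∈ Ioc 0 T :=
    ⟨mul_pos hs.1 ht.1, (mul_le_of_le_one_left ht.1.le hs.2).trans ht.2⟩
  have hsp : 0 ≤ s ^ p := Real.rpow_nonneg hs.1.le p
  calc ψ (s * t) ≤ D * φ (s * t) := (hequiv _ hst).1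
    _ ≤ D * (s ^ p * φ t) := by
      gcongr
      exact apply_mul_le_of_convexOn_comp_rpow hp hconv hφ.apply_zero.le
        (Ioc_subset_Icc_self hs) ht.1.le
    _ ≤ D * (s ^ p * (D * ψ t)) := by gcongr; exact (hequiv t ht).2
    _ = D ^ 2 * s ^ p * ψ t := by ring

lemma EquivSmall.exists_le_apply_mul (h : EquivSmall ψ φ) (hψ : IsOrlicz ψ) (hφ : IsOrlicz φ)
    (hp : 0 < p) (hconc : ConcaveOn ℝ (Ici 0) fun u => φ (u ^ p⁻¹)) (T : ℝ) :
    ∃ C, 0 < C ∧ ∀ s ∈ Ioc (0 : ℝ) 1, ∀ t ∈ Ioc 0 T, s ^ p * ψ t ≤ C * ψ (s * t) := by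
  obtain ⟨D, hD, hequiv⟩ := h.exists_le_mul_on_Ioc hψ hφ T
  refine ⟨D ^ 2, by positivity, fun s hs t ht => ?_⟩
  have hst : s * t ∈ Ioc 0 T :=
    ⟨mul_pos hs.1 ht.1, (mul_le_of_le_one_left ht.1.le hs.2).trans ht.2⟩
  have hsp : 0 ≤ s ^ p := Real.rpow_nonneg hs.1.le p
  calc s ^ p * ψ t ≤ s ^ p * (D * φ t) := by gcongr; exact (hequiv t ht).1
    _ = D * (s ^ p * φ t) := mul_left_comm _ _ _
    _ ≤ D * φ (s * t) := by
      gcongr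
      exact le_apply_mul_of_concaveOn_comp_rpow hp hconc hφ.apply_zero.ge
        (Ioc_subset_Icc_self hs) ht.1.le
    _ ≤ D * (D * ψ (s * t)) := by gcongr; exact (hequiv _ hst).2
    _ = D ^ 2 * ψ (s * t) := by ring

theorem IsOrlicz.exists_convexOn_comp_rpow_equivSmall (hψ : IsOrlicz ψ) (hp : 1 ≤ p) (hT : 0 < T)
    (hC : ∀ x ∈ Ioc 0 T, ∀ y ∈ Ioc 0 T, x ≤ y → ψ x / x ^ p ≤ C * (ψ y / y ^ p)) :
    ∃ φ, IsOrlicz φ ∧ ConvexOn ℝ (Ici 0) (fun u => φ (u ^ p⁻¹)) ∧ EquivSmall ψ φ := by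
  have hg := hψ.hasOrliczDensity_rightDeriv
  set g := fun x => derivWithin ψ (Ioi x) x
  have hK : 0 < 2 ^ p * max 1 C := by positivity
  have hw0 : ∀ x ∈ Ioi (0 : ℝ), 0 < x ^ (p - 1) := fun x hx => Real.rpow_pos_of_pos hx _
  have hw : MonotoneOn (fun x : ℝ => x ^ (p - 1)) (Ioi 0) :=
    fun x hx y _ hxy => Real.rpow_le_rpow (le_of_lt hx) hxy (sub_nonneg.2 hp)
  have hf0 : ∀ x ∈ Ioi 0, 0 ≤ g x / x ^ (p - 1) := fun x hx =>
    (div_pos (hg.pos x hx) (hw0 x hx)).le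
  obtain ⟨h, hmono, hh0, hh⟩ := exists_monotoneOn_minorant hT hK (fun x hx => hf0 x hx.1)
    fun x hx y hy hxy => hg.div_rpow_le_of_apply_div_rpow_le hp hC hx.1 hxy hy.2
  have hφ := hg.of_div_le hT hK (fun x hx => hw0 x hx.1)
    (hw.mul hmono (fun x hx => (hw0 x hx).le) hh0) hh
  exact ⟨_, hφ.isOrlicz, hφ.convexOn_comp_rpow (by linarith) hmono,
    hg.equivSmall_of_div_le hφ hT (fun x hx => hw0 x hx.1) hh⟩

theorem IsOrlicz.exists_concaveOn_comp_rpow_equivSmall (hψ : IsOrlicz ψ) (hp : 1 ≤ p) (hT : 0 < T)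
    (hC0 : 0 < C) (hC : ∀ x ∈ Ioc 0 T, ∀ y ∈ Ioc 0 T, x ≤ y → ψ y / y ^ p ≤ C * (ψ x / x ^ p)) :
    ∃ φ, IsOrlicz φ ∧ ConcaveOn ℝ (Ici 0) (fun u => φ (u ^ p⁻¹)) ∧ EquivSmall ψ φ := by
  have hg := hψ.hasOrliczDensity_rightDeriv
  set g := fun x => derivWithin ψ (Ioi x) x
  have hK : 0 < 2 ^ p * C := by positivity
  have hw0 : ∀ x ∈ Ioi (0 : ℝ), 0 < x ^ (p - 1) := fun x hx => Real.rpow_pos_of_pos hx _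
  have hw : MonotoneOn (fun x : ℝ => x ^ (p - 1)) (Ioi 0) :=
    fun x hx y _ hxy => Real.rpow_le_rpow (le_of_lt hx) hxy (sub_nonneg.2 hp)
  have hf0 : ∀ x ∈ Ioi 0, 0 ≤ g x / x ^ (p - 1) := fun x hx =>
    (div_pos (hg.pos x hx) (hw0 x hx)).le
  have hwf : MonotoneOn (fun x => x ^ (p - 1) * (g x / x ^ (p - 1))) (Ioi 0) :=
    hg.monotoneOn.congr fun x hx => (mul_div_cancel₀ _ (hw0 x hx).ne').symm
  obtain ⟨h, hanti, hmono, hh⟩ := exists_antitoneOn_minorant (T := T / 2) hK hw0 hw hf0 hwf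
    fun x hx y hy hxy =>
      hg.div_rpow_le_of_le_apply_div_rpow hC0.le hC hx.1 hxy (by linarith [hy.2])
  have hφ := hg.of_div_le (half_pos hT) hK (fun x hx => hw0 x hx.1) hmono hh
  exact ⟨_, hφ.isOrlicz, hφ.concaveOn_comp_rpow (by linarith) hanti,
    hg.equivSmall_of_div_le hφ (half_pos hT) (fun x hx => hw0 x hx.1) hh⟩

end Characterization

/-- For `1 ≤ p < ∞` and an Orlicz function `ψ`: `ψ` is equivalent for small arguments
to a `p`-convex Orlicz function iff `ψ(st) ≤ C s^p ψ(t)` for all `0 < s,t ≤ 1`;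
dually, `ψ` is equivalent for small arguments to a `p`-concave Orlicz function iff
`s^p ψ(t) ≤ C ψ(st)` for all `0 < s,t ≤ 1`. -/
theorem stmt10 (p : ℝ) (hp : 1 ≤ p) (ψ : ℝ → ℝ) (hψ : IsOrlicz ψ) :
    ((∃ φ : ℝ → ℝ, IsOrlicz φ ∧
        ConvexOn ℝ (Ici (0:ℝ)) (fun t => φ (t ^ (1 / p))) ∧ EquivSmall ψ φ) ↔
      (∃ C : ℝ, 0 < C ∧
        ∀ s ∈ Ioc (0:ℝ) 1, ∀ t ∈ Ioc (0:ℝ) 1, ψ (s * t) ≤ C * s ^ p * ψ t)) ∧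
    ((∃ φ : ℝ → ℝ, IsOrlicz φ ∧
        ConcaveOn ℝ (Ici (0:ℝ)) (fun t => φ (t ^ (1 / p))) ∧ EquivSmall ψ φ) ↔
      (∃ C : ℝ, 0 < C ∧
        ∀ s ∈ Ioc (0:ℝ) 1, ∀ t ∈ Ioc (0:ℝ) 1, s ^ p * ψ t ≤ C * ψ (s * t))) := by
  simp only [one_div]
  have hp0 : 0 < p := zero_lt_one.trans_le hp
  refine ⟨⟨?_, ?_⟩, ?_, ?_⟩
  · rintro ⟨φ, hφ, hconv, hequiv⟩
    exact hequiv.exists_apply_mul_le hψ hφ hp0 hconv 1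
  · rintro ⟨C, -, hC⟩
    exact hψ.exists_convexOn_comp_rpow_equivSmall hp one_pos (div_rpow_le_of_apply_mul_le hC)
  · rintro ⟨φ, hφ, hconc, hequiv⟩
    exact hequiv.exists_le_apply_mul hψ hφ hp0 hconc 1
  · rintro ⟨C, hC0, hC⟩
    exact hψ.exists_concaveOn_comp_rpow_equivSmall hp one_pos hC0 (div_rpow_le_of_le_apply_mul hC)
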